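/- Let A and B₁, …, B_m be convex bodies in ℝⁿ, let 1 ≤ k ≤ m, and let 𝒞_k denote the collection of all subsets of {1, …, m} of cardinality k. Suppose that for each s ∈ 𝒞_k one has |A + Σ_{i∈s} B_i|^{1/n} ≤ c_s · |A|^{1/n} for given numbers c_s. Then |A + Σ_{i=1}^{m} B_i|^{1/n} ≤ (1+m) · (Π_{s∈𝒞_k} c_s)^{1/binom(m−1, k−1)} · |A|^{1/n}. -/

import Mathlib

open MeasureTheory ProbabilityTheory Real
open scoped Pointwise ENNReal

noncomputable def ent {n : ℕ} (f : EuclideanSpace ℝ (Fin n) → ℝ) : ℝ :=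
  -∫ x, f x * Real.log (f x)

noncomputable def densSup {n : ℕ} (f : EuclideanSpace ℝ (Fin n) → ℝ) : ℝ :=
  (essSup (fun x => ENNReal.ofReal (f x)) volume).toReal

def HasDensity {Ω : Type*} [MeasurableSpace Ω] (P : Measure Ω) {n : ℕ}
    (X : Ω → EuclideanSpace ℝ (Fin n)) (f : EuclideanSpace ℝ (Fin n) → ℝ) : Prop :=
  Measure.map X P = volume.withDensity (fun x => ENNReal.ofReal (f x))

def ConvexForm {n : ℕ} (f : EuclideanSpace ℝ (Fin n) → ℝ) (β : ℝ) : Prop :=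
  ∃ (S : Set (EuclideanSpace ℝ (Fin n))) (V : EuclideanSpace ℝ (Fin n) → ℝ),
    IsOpen S ∧ Convex ℝ S ∧ ConvexOn ℝ S V ∧
    (∀ x ∈ S, 0 < V x) ∧ (∀ x ∈ S, f x = V x ^ (-β)) ∧ (∀ x ∉ S, f x = 0)

def LogConcaveDensity {n : ℕ} (f : EuclideanSpace ℝ (Fin n) → ℝ) : Prop :=
  (∀ x, 0 ≤ f x) ∧
  ∀ x y : EuclideanSpace ℝ (Fin n), ∀ t : ℝ, 0 < t → t < 1 →
    f x ^ t * f y ^ (1 - t) ≤ f (t • x + (1 - t) • y)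

def KConcave {n : ℕ} (μ : Measure (EuclideanSpace ℝ (Fin n))) (κ : ℝ) : Prop :=
  ∀ A B : Set (EuclideanSpace ℝ (Fin n)), MeasurableSet A → MeasurableSet B →
    0 < μ A → 0 < μ B → ∀ t : ℝ, 0 < t → t < 1 →
      (t * (μ A).toReal ^ κ + (1 - t) * (μ B).toReal ^ κ) ^ (1/κ) ≤
        (μ (t • A + (1 - t) • B)).toReal

def IsConvexBody {n : ℕ} (A : Set (EuclideanSpace ℝ (Fin n))) : Prop :=
  Convex ℝ A ∧ IsCompact A ∧ (interior A).Nonempty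

def IsUniformOn {Ω : Type*} [MeasurableSpace Ω] (P : Measure Ω) {n : ℕ}
    (X : Ω → EuclideanSpace ℝ (Fin n)) (A : Set (EuclideanSpace ℝ (Fin n))) : Prop :=
  Measure.map X P = (volume A)⁻¹ • volume.restrict A

open MeasureTheory ProbabilityTheory Real
open scoped Pointwise ENNReal

lemma bm_compact {K L C : Set ℝ} (hK : IsCompact K) (hL : IsCompact L) (hKn : K.Nonempty)
    (hLn : L.Nonempty) (h : ∀ x ∈ K, ∀ y ∈ L, x + y ∈ C) : volume K + volume L ≤ volume C := by
  obtain ⟨a, ha, ha'⟩ := hK.exists_isGreatest hKn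
  obtain ⟨b, hb, hb'⟩ := hL.exists_isLeast hLn
  have e1 : volume ((fun x => x + (-b)) ⁻¹' K) = volume K := measure_preimage_add_right _ _ _
  have e2 : volume ((fun x => x + (-a)) ⁻¹' L) = volume L := measure_preimage_add_right _ _ _
  rw [← e1, ← e2, ← measure_union₀]
  · apply measure_mono
    rintro x (hx | hx)
    · have := h _ hx _ hb
      simpa using this
    · have := h _ ha _ hx
      simpa using this
  · exact (hL.measurableSet.preimage (by fun_prop)).nullMeasurableSet
  · refine measure_mono_null (t := {a + b}) ?_ (by simp)
    rintro x ⟨h1, h2⟩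
    have h1' := ha' h1
    have h2' := hb' h2
    simp only [Set.mem_singleton_iff]
    linarith

lemma bm_one {A B C : Set ℝ} (hA : MeasurableSet A) (hB : MeasurableSet B) (hAn : A.Nonempty)
    (hBn : B.Nonempty) (h : ∀ x ∈ A, ∀ y ∈ B, x + y ∈ C) : volume A + volume B ≤ volume C := by
  have key : ∀ K ⊆ A, IsCompact K → ∀ L ⊆ B, IsCompact L → volume K + volume L ≤ volume C := by
    intro K hK hKc L hL hLc
    obtain ⟨a, ha⟩ := hAn
    obtain ⟨b, hb⟩ := hBn
    refine le_trans (add_le_add (measure_mono (Set.subset_insert a K))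
      (measure_mono (Set.subset_insert b L))) ?_
    refine bm_compact (hKc.insert a) (hLc.insert b) (Set.insert_nonempty _ _)
      (Set.insert_nonempty _ _) ?_
    intro x hx y hy
    exact h x (Set.insert_subset ha hK hx) y (Set.insert_subset hb hL hy)
  have key2 : ∀ K ⊆ A, IsCompact K → volume K + volume B ≤ volume C := by
    intro K hK hKc
    rw [hB.measure_eq_iSup_isCompact]
    by_cases hv : volume K = ∞
    · have := key K hK hKc ∅ (by simp) isCompact_empty
      rw [hv] at this ⊢
      simpa using this
    have : ∀ L ⊆ B, IsCompact L → volume L ≤ volume C - volume K := by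
      intro L hL hLc
      exact ENNReal.le_sub_of_add_le_left hv (key K hK hKc L hL hLc)
    have h3 : (⨆ L, ⨆ (_ : L ⊆ B), ⨆ (_ : IsCompact L), volume L) ≤ volume C - volume K :=
      iSup_le fun L => iSup_le fun hL => iSup_le fun hLc => this L hL hLc
    calc _ ≤ volume K + (volume C - volume K) := by gcongr
      _ = volume C := add_tsub_cancel_of_le (le_trans (by simp) (key K hK hKc ∅ (by simp) isCompact_empty))
  by_cases hv : volume B = ∞
  · have := key2 ∅ (by simp) isCompact_empty
    rw [hv] at this ⊢
    simpa using this
  have h3 : volume A ≤ volume C - volume B := by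
    rw [hA.measure_eq_iSup_isCompact]
    exact iSup_le fun L => iSup_le fun hL => iSup_le fun hLc =>
      ENNReal.le_sub_of_add_le_right hv (key2 L hL hLc)
  calc _ ≤ (volume C - volume B) + volume B := by gcongr
    _ = volume C := tsub_add_cancel_of_le (le_trans (by simp) (key2 ∅ (by simp) isCompact_empty))

lemma ennreal_amgm {w : ℝ} (h0 : 0 < w) (h1 : w < 1) (a b : ℝ≥0∞) :
    a ^ (1 - w) * b ^ w ≤ ENNReal.ofReal (1 - w) * a + ENNReal.ofReal w * b := by
  by_cases ha : a = ∞
  · subst ha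
    have : ENNReal.ofReal (1 - w) ≠ 0 := by simp; linarith
    simp [ENNReal.mul_top this]
  by_cases hb : b = ∞
  · subst hb
    have : ENNReal.ofReal w ≠ 0 := by simp; linarith
    simp [ENNReal.mul_top this]
  have := Real.geom_mean_le_arith_mean2_weighted (w₁ := 1 - w) (w₂ := w) (p₁ := a.toReal)
    (p₂ := b.toReal) (by linarith) h0.le (by simp) (by simp) (by ring)
  have h2 := ENNReal.ofReal_le_ofReal this
  rw [ENNReal.ofReal_mul (by positivity), ENNReal.ofReal_add (by apply mul_nonneg; linarith; simp) (by positivity),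
    ENNReal.ofReal_mul (by linarith), ENNReal.ofReal_mul (by linarith),
    ← ENNReal.ofReal_rpow_of_nonneg (by simp) (by linarith), ← ENNReal.ofReal_rpow_of_nonneg (by simp) (by linarith),
    ENNReal.ofReal_toReal ha, ENNReal.ofReal_toReal hb] at h2
  exact h2

lemma layer {α : Type*} [MeasurableSpace α] (μ : Measure α) (u : α → ℝ≥0∞) (hu : Measurable u) (hb : ∀ x, u x ≤ 1) :
    ∫⁻ x, u x ∂μ = ∫⁻ t in Set.Ioi (0:ℝ), μ {x | ENNReal.ofReal t < u x} := by
  have h := lintegral_eq_lintegral_meas_lt (f := fun x => (u x).toReal) μ (by filter_upwards with x; simp)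
    (by fun_prop)
  have hne : ∀ x, u x ≠ ∞ := fun x => ((hb x).trans_lt ENNReal.one_lt_top).ne
  simp only [ENNReal.ofReal_toReal (hne _)] at h
  rw [h]
  apply setLIntegral_congr_fun measurableSet_Ioi
  intro t ht
  have hset : {x | t < (u x).toReal} = {x | ENNReal.ofReal t < u x} := by
    ext x
    exact (ENNReal.ofReal_lt_iff_lt_toReal (le_of_lt ht) (hne x)).symm
  simp only [hset]

def PrekopaL (E : Type*) [MeasureSpace E] [AddCommGroup E] [Module ℝ E] : Prop :=
  ∀ w : ℝ, 0 < w → w < 1 → ∀ u v h : E → ℝ≥0∞, Measurable u → Measurable v → Measurable h →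
    (∀ x y, u x ^ (1 - w) * v y ^ w ≤ h ((1 - w) • x + w • y)) →
    (∫⁻ x, u x) ^ (1 - w) * (∫⁻ x, v x) ^ w ≤ ∫⁻ x, h x

lemma pl_norm (w : ℝ) (h0 : 0 < w) (h1 : w < 1) (u v h : ℝ → ℝ≥0∞) (hu : Measurable u)
    (hv : Measurable v) (hh : Measurable h)
    (H : ∀ x y, u x ^ (1 - w) * v y ^ w ≤ h ((1 - w) • x + w • y))
    (su : ⨆ x, u x = 1) (sv : ⨆ x, v x = 1) :
    (∫⁻ x, u x) ^ (1 - w) * (∫⁻ x, v x) ^ w ≤ ∫⁻ x, h x := by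
  have u1 : ∀ x, u x ≤ 1 := fun x => su ▸ le_iSup u x
  have v1 : ∀ x, v x ≤ 1 := fun x => sv ▸ le_iSup v x
  refine (ennreal_amgm h0 h1 _ _).trans ?_
  refine le_trans ?_ (lintegral_mono (fun x => min_le_left (h x) 1))
  rw [layer _ u hu u1, layer _ v hv v1, layer _ (fun x => min (h x) 1) (hh.min measurable_const)
    (fun x => min_le_right _ _)]
  have mm : ∀ u : ℝ → ℝ≥0∞, Measurable fun t : ℝ => volume {x | ENNReal.ofReal t < u x} := by
    intro u
    apply Antitone.measurable
    intro s t hst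
    apply measure_mono
    intro x hx
    exact lt_of_le_of_lt (ENNReal.ofReal_le_ofReal hst) hx
  rw [← lintegral_const_mul _ (mm u), ← lintegral_const_mul _ (mm v),
    ← lintegral_add_left ((mm u).const_mul _)]
  apply setLIntegral_mono ((mm _))
  intro t ht
  have ht : 0 < t := ht
  by_cases ht1 : 1 ≤ t
  · have hz : ∀ u : ℝ → ℝ≥0∞, (∀ x, u x ≤ 1) → {x | ENNReal.ofReal t < u x} = ∅ := by
      intro u hu1
      ext x
      simp only [Set.mem_ofPred_eq, Set.mem_empty_iff_false, iff_false, not_lt]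
      exact (hu1 x).trans (by simpa using ht1)
    rw [hz u u1, hz v v1]; simp
  push Not at ht1
  have lt1 : ENNReal.ofReal t < 1 := by simpa using ht1
  have sm : ∀ (r : ℝ), 0 < r → ∀ S : Set ℝ, ENNReal.ofReal r * volume S = volume (r • S) := by
    intro r hr S
    rw [Measure.addHaar_smul]
    simp [abs_of_pos hr]
  rw [sm _ (by linarith), sm _ h0]
  apply bm_one
  · exact (measurableSet_lt measurable_const hu).const_smul₀ _
  · exact (measurableSet_lt measurable_const hv).const_smul₀ _
  · rw [← su, lt_iSup_iff] at lt1
    obtain ⟨x, hx⟩ := lt1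
    exact Set.Nonempty.smul_set ⟨x, hx⟩
  · rw [← sv, lt_iSup_iff] at lt1
    obtain ⟨x, hx⟩ := lt1
    exact Set.Nonempty.smul_set ⟨x, hx⟩
  · rintro _ ⟨x, hx, rfl⟩ _ ⟨y, hy, rfl⟩
    refine lt_min (lt_of_lt_of_le ?_ (H x y)) lt1
    have hx : ENNReal.ofReal t < u x := hx
    have hy : ENNReal.ofReal t < v y := hy
    have e : ENNReal.ofReal t = ENNReal.ofReal t ^ (1 - w) * ENNReal.ofReal t ^ w := by
      rw [← ENNReal.rpow_add _ _ (by simpa using ht) (by simp)]; simp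
    rw [e]
    exact ENNReal.mul_lt_mul (ENNReal.rpow_lt_rpow hx (by linarith)) (ENNReal.rpow_lt_rpow hy h0)

lemma pl_bdd (w : ℝ) (h0 : 0 < w) (h1 : w < 1) (u v h : ℝ → ℝ≥0∞) (hu : Measurable u)
    (hv : Measurable v) (hh : Measurable h)
    (H : ∀ x y, u x ^ (1 - w) * v y ^ w ≤ h ((1 - w) • x + w • y))
    (su : ⨆ x, u x ≠ ∞) (sv : ⨆ x, v x ≠ ∞) :
    (∫⁻ x, u x) ^ (1 - w) * (∫⁻ x, v x) ^ w ≤ ∫⁻ x, h x := by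
  by_cases su0 : ⨆ x, u x = 0
  · have : ∀ x, u x = 0 := by simpa using su0
    simp [this, ENNReal.zero_rpow_of_pos (show 0 < 1 - w by linarith)]
  by_cases sv0 : ⨆ x, v x = 0
  · have : ∀ x, v x = 0 := by simpa using sv0
    simp [this, ENNReal.zero_rpow_of_pos h0]
  set a := ⨆ x, u x with ha
  set b := ⨆ x, v x with hb
  have h1w : 0 < 1 - w := by linarith
  have key := pl_norm w h0 h1 (fun x => a⁻¹ * u x) (fun x => b⁻¹ * v x)
    (fun x => ((a⁻¹) ^ (1 - w) * (b⁻¹) ^ w) * h x) (hu.const_mul _) (hv.const_mul _) (hh.const_mul _)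
    (by
      intro x y
      rw [ENNReal.mul_rpow_of_nonneg _ _ h1w.le, ENNReal.mul_rpow_of_nonneg _ _ h0.le]
      calc _ = ((a⁻¹) ^ (1 - w) * (b⁻¹) ^ w) * (u x ^ (1 - w) * v y ^ w) := by ring
        _ ≤ _ := by gcongr; exact H x y)
    (by rw [← ENNReal.mul_iSup, ← ha, ENNReal.inv_mul_cancel su0 su])
    (by rw [← ENNReal.mul_iSup, ← hb, ENNReal.inv_mul_cancel sv0 sv])
  rw [lintegral_const_mul _ hu, lintegral_const_mul _ hv, lintegral_const_mul _ hh,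
    ENNReal.mul_rpow_of_nonneg _ _ h1w.le, ENNReal.mul_rpow_of_nonneg _ _ h0.le] at key
  have e : ∀ p q r s : ℝ≥0∞, p * q * (r * s) = p * r * (q * s) := by intros; ring
  rw [e] at key
  refine (ENNReal.mul_le_mul_iff_right ?_ ?_).1 key
  · clear_value a b
    apply mul_ne_zero <;> simp [su, sv, su0, sv0, h1.le, h0.le]
  · clear_value a b
    apply ENNReal.mul_ne_top <;> apply ENNReal.rpow_ne_top_of_nonneg <;>
      simp [su0, sv0, h1.le, h0.le]

lemma pl_real : PrekopaL ℝ := by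
  intro w h0 h1 u v h hu hv hh H
  have h1w : 0 < 1 - w := by linarith
  by_cases iu : ∫⁻ x, u x = 0
  · simp [iu, ENNReal.zero_rpow_of_pos h1w]
  by_cases iv : ∫⁻ x, v x = 0
  · simp [iv, ENNReal.zero_rpow_of_pos h0]
  have tr : ∀ u : ℝ → ℝ≥0∞, Measurable u →
      Filter.Tendsto (fun N : ℕ => ∫⁻ x, min (u x) N) Filter.atTop (nhds (∫⁻ x, u x)) := by
    intro u hu
    apply lintegral_tendsto_of_tendsto_of_monotone
    · intro N; exact (hu.min measurable_const).aemeasurable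
    · filter_upwards with x N M hNM
      exact min_le_min le_rfl (by exact_mod_cast hNM)
    · filter_upwards with x
      have : Filter.Tendsto (fun N : ℕ => min (u x) (N : ℝ≥0∞)) Filter.atTop (nhds (min (u x) ∞)) :=
        tendsto_const_nhds.min ENNReal.tendsto_nat_nhds_top
      simpa using this
  have key : ∀ N : ℕ, (∫⁻ x, min (u x) N) ^ (1 - w) * (∫⁻ x, min (v x) N) ^ w ≤ ∫⁻ x, h x := by
    intro N
    apply pl_bdd w h0 h1 _ _ _ (hu.min measurable_const) (hv.min measurable_const) hh
    · intro x y
      refine le_trans ?_ (H x y)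
      gcongr <;> exact min_le_left _ _
    · exact ((iSup_le fun x => min_le_right _ _).trans_lt (ENNReal.natCast_lt_top N)).ne
    · exact ((iSup_le fun x => min_le_right _ _).trans_lt (ENNReal.natCast_lt_top N)).ne
  refine le_of_tendsto' (ENNReal.Tendsto.mul ((tr u hu).ennrpow_const _) (Or.inl ?_)
    ((tr v hv).ennrpow_const _) (Or.inl ?_)) key
  · simp [iu, h1w, h1.le]
  · simp [iv, h0.le, h0]

lemma pl_prod {E F : Type*} [MeasureSpace E] [AddCommGroup E] [Module ℝ E]
    [MeasureSpace F] [AddCommGroup F] [Module ℝ F] [SFinite (volume : Measure E)]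
    [SFinite (volume : Measure F)]
    (hE : PrekopaL E) (hF : PrekopaL F) : PrekopaL (E × F) := by
  intro w h0 h1 u v h hu hv hh H
  rw [Measure.volume_eq_prod, lintegral_prod _ hu.aemeasurable, lintegral_prod _ hv.aemeasurable,
    lintegral_prod _ hh.aemeasurable]
  apply hE w h0 h1 _ _ _ hu.lintegral_prod_right' hv.lintegral_prod_right' hh.lintegral_prod_right'
  intro x x'
  apply hF w h0 h1 _ _ _ (by fun_prop) (by fun_prop) (by fun_prop)
  intro y y'
  exact H (x, y) (x', y')

lemma pl_transfer {E F : Type*} [MeasureSpace E] [AddCommGroup E] [Module ℝ E]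
    [MeasureSpace F] [AddCommGroup F] [Module ℝ F] (f : E → F)
    (hf : MeasurePreserving f) (hl : ∀ (a b : ℝ) x y, f (a • x + b • y) = a • f x + b • f y)
    (hE : PrekopaL E) : PrekopaL F := by
  intro w h0 h1 u v h hu hv hh H
  rw [← hf.lintegral_comp hu, ← hf.lintegral_comp hv, ← hf.lintegral_comp hh]
  apply hE w h0 h1 _ _ _ (hu.comp hf.measurable) (hv.comp hf.measurable) (hh.comp hf.measurable)
  intro x y
  simp only [hl, Function.comp]
  exact H _ _

lemma pl_pi (n : ℕ) : PrekopaL (Fin n → ℝ) := by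
  induction n with
  | zero =>
    intro w h0 h1 u v h hu hv hh H
    have := H 0 0
    have hz : ∀ u : (Fin 0 → ℝ) → ℝ≥0∞, ∫⁻ x, u x = u 0 := by
      intro u
      rw [lintegral_unique, volume_pi, Measure.pi_empty_univ, mul_one]
      congr 1
      exact Subsingleton.elim _ _
    rw [hz, hz, hz]
    convert this using 2
  | succ n ih =>
    have hm := (volume_preserving_piFinSuccAbove (fun _ : Fin (n+1) => ℝ) 0).symm
    refine pl_transfer _ hm ?_ (pl_prod pl_real ih)
    intro a b x y
    ext i
    refine Fin.cases ?_ (fun j => ?_) i <;> simp [MeasurableEquiv.piFinSuccAbove, Fin.insertNthEquiv]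

lemma pl_euc (n : ℕ) : PrekopaL (EuclideanSpace ℝ (Fin n)) :=
  pl_transfer (fun x => WithLp.toLp 2 x) (PiLp.volume_preserving_toLp (Fin n)) (fun _ _ _ _ => rfl) (pl_pi n)

open MeasureTheory ProbabilityTheory Real
open scoped Pointwise ENNReal

section EntropyPart

variable {n : ℕ}

/-- Bounded, compactly supported probability densities. -/
structure NiceDens (g : EuclideanSpace ℝ (Fin n) → ℝ≥0∞) : Prop where
  meas : Measurable g
  bdd : ∃ C : ℝ, ∀ x, g x ≤ ENNReal.ofReal C
  int : ∫⁻ x, g x = 1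
  supp : ∃ r : ℝ, ∀ x, r < ‖x‖ → g x = 0

/-- Density of the sum with an independent variable of law `ν`. -/
noncomputable def smear (ν : Measure (EuclideanSpace ℝ (Fin n)))
    (g : EuclideanSpace ℝ (Fin n) → ℝ≥0∞) (z : EuclideanSpace ℝ (Fin n)) : ℝ≥0∞ :=
  ∫⁻ y, g (z - y) ∂ν

noncomputable def dEnt (g : EuclideanSpace ℝ (Fin n) → ℝ≥0∞) : ℝ :=
  -∫ x, Real.log (g x).toReal ∂(volume.withDensity g)

variable {ν η : Measure (EuclideanSpace ℝ (Fin n))} [IsProbabilityMeasure ν]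
  [IsProbabilityMeasure η] {g : EuclideanSpace ℝ (Fin n) → ℝ≥0∞}

lemma smear_meas (hg : Measurable g) : Measurable (smear ν g) := by
  unfold smear
  have : Measurable (fun p : EuclideanSpace ℝ (Fin n) × EuclideanSpace ℝ (Fin n) => g (p.1 - p.2)) :=
    hg.comp (by fun_prop)
  exact this.lintegral_prod_right'

lemma smear_lintegral (hg : Measurable g) {φ : EuclideanSpace ℝ (Fin n) → ℝ≥0∞}
    (hφ : Measurable φ) :
    ∫⁻ z, smear ν g z * φ z = ∫⁻ x, ∫⁻ y, g x * φ (x + y) ∂ν := by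
  unfold smear
  have h1 : ∀ z, (∫⁻ y, g (z - y) ∂ν) * φ z = ∫⁻ y, g (z - y) * φ z ∂ν := by
    intro z
    rw [lintegral_mul_const _ (by fun_prop)]
  simp only [h1]
  rw [lintegral_lintegral_swap, lintegral_lintegral_swap (f := fun x y => g x * φ (x + y))]
  · apply lintegral_congr
    intro y
    rw [← lintegral_sub_right_eq_self (fun x => g x * φ (x + y)) y]
    simp
  · apply Measurable.aemeasurable; fun_prop
  · apply Measurable.aemeasurable; fun_prop

lemma smear_comm (hg : Measurable g) : smear ν (smear η g) = smear η (smear ν g) := by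
  funext z
  unfold smear
  rw [lintegral_lintegral_swap]
  · apply lintegral_congr
    intro y
    apply lintegral_congr
    intro x
    congr 1
    abel
  · apply Measurable.aemeasurable
    exact hg.comp (by fun_prop)

lemma NiceDens.smear (hg : NiceDens g) {ρ : ℝ} (hν : ∀ᵐ y ∂ν, ‖y‖ ≤ ρ) : NiceDens (smear ν g) := by
  obtain ⟨C, hC⟩ := hg.bdd
  obtain ⟨r, hr⟩ := hg.supp
  refine ⟨smear_meas hg.meas, ⟨C, fun x => ?_⟩, ?_, ⟨r + ρ, fun x hx => ?_⟩⟩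
  · calc _ ≤ ∫⁻ y, ENNReal.ofReal C ∂ν := lintegral_mono fun y => hC _
      _ = _ := by simp
  · have := smear_lintegral (ν := ν) hg.meas (φ := fun _ => 1) measurable_const
    simpa [hg.int] using this
  · unfold _root_.smear
    rw [lintegral_eq_zero_iff' (by have := hg.meas; fun_prop)]
    filter_upwards [hν] with y hy
    apply hr
    have := norm_sub_norm_le x y
    linarith

lemma NiceDens.prob (hg : NiceDens g) : IsProbabilityMeasure (volume.withDensity g) :=
  ⟨by rw [withDensity_apply _ MeasurableSet.univ, setLIntegral_univ, hg.int]⟩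

lemma smear_mp (hg : NiceDens g) :
    MeasurePreserving (fun p : EuclideanSpace ℝ (Fin n) × EuclideanSpace ℝ (Fin n) => p.1 + p.2)
      ((volume.withDensity g).prod ν) (volume.withDensity (smear ν g)) := by
  have := hg.prob
  refine ⟨by fun_prop, ?_⟩
  ext s hs
  have hm := hg.meas
  rw [Measure.map_apply (by fun_prop) hs, ← lintegral_indicator_one (hs.preimage (by fun_prop)),
    lintegral_prod _ (by apply Measurable.aemeasurable; exact measurable_one.indicator (hs.preimage (by fun_prop))),
    withDensity_apply _ hs, ← lintegral_indicator hs]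
  have e : ∀ z, s.indicator (smear ν g) z = smear ν g z * s.indicator 1 z := by
    intro z
    by_cases hz : z ∈ s <;> simp [hz]
  simp only [e]
  have mi : Measurable (s.indicator (1 : EuclideanSpace ℝ (Fin n) → ℝ≥0∞)) := measurable_one.indicator hs
  rw [smear_lintegral hm mi, lintegral_withDensity_eq_lintegral_mul _ hm]
  · apply lintegral_congr
    intro x
    simp only [Pi.mul_apply]
    rw [← lintegral_const_mul _ (f := fun y => ((fun p : EuclideanSpace ℝ (Fin n) × EuclideanSpace ℝ (Fin n) => p.1 + p.2) ⁻¹' s).indicator 1 (x, y))]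
    · rfl
    · exact mi.comp (by fun_prop)
  · exact Measurable.lintegral_prod_right' (ν := ν) (f := fun p : EuclideanSpace ℝ (Fin n) × EuclideanSpace ℝ (Fin n) => ((fun p => p.1 + p.2) ⁻¹' s).indicator 1 p) (mi.comp (by fun_prop : Measurable fun p : EuclideanSpace ℝ (Fin n) × EuclideanSpace ℝ (Fin n) => p.1 + p.2))

lemma NiceDens.ne_top (hg : NiceDens g) (x) : g x ≠ ∞ := by
  obtain ⟨C, hC⟩ := hg.bdd
  exact ((hC x).trans_lt ENNReal.ofReal_lt_top).ne

lemma NiceDens.ae_pos (hg : NiceDens g) : ∀ᵐ x ∂(volume.withDensity g), 0 < (g x).toReal := by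
  rw [ae_withDensity_iff hg.meas]
  filter_upwards with x hx
  exact ENNReal.toReal_pos hx (hg.ne_top x)

lemma NiceDens.integrable_log (hg : NiceDens g) :
    Integrable (fun x => Real.log (g x).toReal) (volume.withDensity g) := by
  have hm := hg.meas
  obtain ⟨C, hC⟩ := hg.bdd
  obtain ⟨r, hr⟩ := hg.supp
  rw [integrable_withDensity_iff hm (by filter_upwards with x; exact (hg.ne_top x).lt_top)]
  obtain ⟨M, hM⟩ : ∃ M, ∀ t ∈ Set.Icc (0:ℝ) (max C 0), ‖t * Real.log t‖ ≤ M :=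
    isCompact_Icc.exists_bound_of_continuousOn Real.continuous_mul_log.continuousOn
  have hon : IntegrableOn (fun x => Real.log (g x).toReal * (g x).toReal) (Metric.closedBall 0 r) := by
    refine IntegrableOn.of_bound measure_closedBall_lt_top (by apply Measurable.aestronglyMeasurable; fun_prop) M ?_
    filter_upwards with x
    rw [mul_comm]
    apply hM
    refine ⟨by simp, ?_⟩
    have := ENNReal.toReal_mono (by simp) (hC x)
    rwa [ENNReal.toReal_ofReal'] at this
  rw [integrableOn_iff_integrable_of_support_subset] at hon
  · exact hon
  · intro x hx
    by_contra hx'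
    simp only [Metric.mem_closedBall, dist_zero_right, not_le] at hx'
    simp [hr x hx'] at hx

lemma int_le_zero {Ω : Type*} [MeasurableSpace Ω] {P : Measure Ω} [IsProbabilityMeasure P]
    {R : Ω → ℝ≥0∞} {L : Ω → ℝ} (hR : Measurable R) (hi : ∫⁻ x, R x ∂P ≤ 1) (hL : Integrable L P)
    (h : ∀ᵐ x ∂P, L x ≤ (R x).toReal - 1) : ∫ x, L x ∂P ≤ 0 := by
  have hfin : ∫⁻ x, R x ∂P ≠ ∞ := (hi.trans_lt ENNReal.one_lt_top).ne
  have hRi := integrable_toReal_of_lintegral_ne_top hR.aemeasurable hfin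
  calc ∫ x, L x ∂P ≤ ∫ x, ((R x).toReal - 1) ∂P := by
        apply integral_mono_ae hL (hRi.sub (integrable_const 1)) h
    _ = ∫ x, (R x).toReal ∂P - 1 := by rw [integral_sub hRi (integrable_const 1)]; simp
    _ ≤ 0 := by
        rw [integral_toReal hR.aemeasurable (ae_lt_top hR hfin)]
        have := ENNReal.toReal_mono ENNReal.one_ne_top hi
        simp at this
        linarith

lemma ent_le_log (hg : NiceDens g) {S : Set (EuclideanSpace ℝ (Fin n))} (hS : MeasurableSet S)
    (h0 : volume S ≠ 0) (ht : volume S ≠ ∞) (hs : ∀ x, x ∉ S → g x = 0) :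
    dEnt g ≤ Real.log (volume S).toReal := by
  have := hg.prob
  have hm := hg.meas
  have key := int_le_zero (P := volume.withDensity g) (R := fun x => (g x * volume S)⁻¹)
    (L := fun x => - Real.log (g x).toReal - Real.log (volume S).toReal) (by fun_prop) ?_
    (hg.integrable_log.neg.sub (integrable_const _)) ?_
  · rw [integral_sub (by exact hg.integrable_log.neg) (integrable_const _), integral_neg] at key
    simp at key
    unfold dEnt
    linarith
  · rw [lintegral_withDensity_eq_lintegral_mul _ hm (by fun_prop)]
    calc _ ≤ ∫⁻ x, S.indicator (fun _ => (volume S)⁻¹) x := by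
          apply lintegral_mono
          intro x
          by_cases hx : x ∈ S
          · simp only [hx, Set.indicator_of_mem, Pi.mul_apply]
            rw [ENNReal.mul_inv (Or.inr ht) (Or.inr h0), ← mul_assoc]
            calc _ ≤ 1 * (volume S)⁻¹ := by gcongr; exact ENNReal.mul_inv_le_one _
              _ = _ := one_mul _
          · simp [hs x hx]
      _ = 1 := by rw [lintegral_indicator hS]; simp [ENNReal.inv_mul_cancel h0 ht]
  · filter_upwards [hg.ae_pos] with x hx
    have hv : 0 < (volume S).toReal := ENNReal.toReal_pos h0 ht
    have := Real.log_le_sub_one_of_pos (show 0 < ((g x).toReal * (volume S).toReal)⁻¹ by positivity)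
    rw [Real.log_inv, Real.log_mul hx.ne' hv.ne'] at this
    simp only [ENNReal.toReal_inv, ENNReal.toReal_mul]
    linarith

lemma submod_R (hg : NiceDens g) :
    ∫⁻ p : (EuclideanSpace ℝ (Fin n) × EuclideanSpace ℝ (Fin n)) × EuclideanSpace ℝ (Fin n),
      (g p.1.1)⁻¹ * (smear ν g (p.1.1 + p.1.2) * smear η g (p.1.1 + p.2) *
        (smear η (smear ν g) (p.1.1 + p.1.2 + p.2))⁻¹)
      ∂(((volume.withDensity g).prod ν).prod η) ≤ 1 := by
  have := hg.prob
  have hm := hg.meas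
  have m1 : Measurable (smear ν g) := smear_meas hm
  have m2 : Measurable (smear η g) := smear_meas hm
  have m12 : Measurable (smear η (smear ν g)) := smear_meas m1
  rw [lintegral_prod _ (by apply Measurable.aemeasurable; fun_prop), lintegral_prod]
  swap
  · apply Measurable.aemeasurable
    apply Measurable.lintegral_prod_right
    unfold Function.uncurry
    fun_prop
  rw [lintegral_withDensity_eq_lintegral_mul _ hm]
  swap
  · (apply Measurable.lintegral_prod_right; unfold Function.uncurry)
    (apply Measurable.lintegral_prod_right; unfold Function.uncurry)
    fun_prop
  set W : EuclideanSpace ℝ (Fin n) → EuclideanSpace ℝ (Fin n) → EuclideanSpace ℝ (Fin n) → ℝ≥0∞ :=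
    fun x y z => smear ν g (x + y) * smear η g (x + z) * (smear η (smear ν g) (x + y + z))⁻¹ with hW
  calc _ ≤ ∫⁻ x, ∫⁻ y, ∫⁻ z, W x y z ∂η ∂ν := by
        apply lintegral_mono
        intro x
        simp only [Pi.mul_apply]
        have e : ∀ y, ∫⁻ z, (g x)⁻¹ * W x y z ∂η = (g x)⁻¹ * ∫⁻ z, W x y z ∂η := by
          intro y
          rw [lintegral_const_mul _ (by fun_prop)]
        change g x * ∫⁻ y, ∫⁻ z, (g x)⁻¹ * W x y z ∂η ∂ν ≤ _
        simp only [e]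
        rw [lintegral_const_mul, ← mul_assoc]
        · calc _ ≤ 1 * (∫⁻ y, ∫⁻ z, W x y z ∂η ∂ν) := by gcongr; exact ENNReal.mul_inv_le_one _
            _ = _ := one_mul _
        · (apply Measurable.lintegral_prod_right; unfold Function.uncurry)
          fun_prop
    _ = ∫⁻ y, ∫⁻ x, ∫⁻ z, W x y z ∂η ∂volume ∂ν := by
        rw [lintegral_lintegral_swap]
        apply Measurable.aemeasurable
        (apply Measurable.lintegral_prod_right; unfold Function.uncurry)
        fun_prop
    _ = ∫⁻ y, ∫⁻ z, ∫⁻ x, W x y z ∂volume ∂η ∂ν := by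
        apply lintegral_congr
        intro y
        rw [lintegral_lintegral_swap]
        apply Measurable.aemeasurable
        fun_prop
    _ = ∫⁻ y, ∫⁻ z, ∫⁻ t, smear ν g (t - z) * smear η g (t - y) * (smear η (smear ν g) t)⁻¹ ∂volume ∂η ∂ν := by
        apply lintegral_congr
        intro y
        apply lintegral_congr
        intro z
        rw [← lintegral_add_right_eq_self (fun t => smear ν g (t - z) * smear η g (t - y) * (smear η (smear ν g) t)⁻¹) (y + z)]
        apply lintegral_congr
        intro x
        simp only [hW]
        congr 3
        · abel
        · abel
        · rw [add_assoc]
    _ = ∫⁻ y, ∫⁻ t, ∫⁻ z, smear ν g (t - z) * smear η g (t - y) * (smear η (smear ν g) t)⁻¹ ∂η ∂volume ∂ν := by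
        apply lintegral_congr
        intro y
        rw [lintegral_lintegral_swap]
        apply Measurable.aemeasurable
        fun_prop
    _ = ∫⁻ t, ∫⁻ y, ∫⁻ z, smear ν g (t - z) * smear η g (t - y) * (smear η (smear ν g) t)⁻¹ ∂η ∂ν := by
        rw [lintegral_lintegral_swap]
        apply Measurable.aemeasurable
        (apply Measurable.lintegral_prod_right; unfold Function.uncurry)
        fun_prop
    _ = ∫⁻ t, smear η (smear ν g) t * (smear ν (smear η g) t * (smear η (smear ν g) t)⁻¹) := by
        apply lintegral_congr
        intro t
        have e : ∀ y, ∫⁻ z, smear ν g (t - z) * smear η g (t - y) * (smear η (smear ν g) t)⁻¹ ∂η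
            = smear η (smear ν g) t * (smear η g (t - y) * (smear η (smear ν g) t)⁻¹) := by
          intro y
          simp only [mul_assoc]
          rw [lintegral_mul_const _ (by fun_prop)]
          rfl
        simp only [e]
        rw [lintegral_const_mul _ (by fun_prop), lintegral_mul_const _ (by fun_prop)]
        rfl
    _ ≤ ∫⁻ t, smear η (smear ν g) t * 1 := by
        rw [smear_comm (ν := ν) (η := η) hm]
        apply lintegral_mono
        intro t
        dsimp only
        gcongr
        exact ENNReal.mul_inv_le_one _
    _ = 1 := by
        rw [smear_lintegral m1 measurable_const]
        simp only [mul_one, lintegral_const, measure_univ]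
        have := smear_lintegral (ν := ν) hm (φ := fun _ => 1) measurable_const
        simpa [hg.int] using this

lemma ent_submod (hg : NiceDens g) {ρ : ℝ} (hν : ∀ᵐ y ∂ν, ‖y‖ ≤ ρ) (hη : ∀ᵐ y ∂η, ‖y‖ ≤ ρ) :
    dEnt (smear η (smear ν g)) + dEnt g ≤ dEnt (smear ν g) + dEnt (smear η g) := by
  have := hg.prob
  have n1 := hg.smear hν
  have n2 := hg.smear hη
  have n12 := n1.smear hη
  have := n1.prob
  have p0 : MeasurePreserving (fun p : (EuclideanSpace ℝ (Fin n) × EuclideanSpace ℝ (Fin n)) × EuclideanSpace ℝ (Fin n) => p.1.1)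
    (((volume.withDensity g).prod ν).prod η) (volume.withDensity g) :=
    measurePreserving_fst.comp measurePreserving_fst
  have p1 : MeasurePreserving (fun p : (EuclideanSpace ℝ (Fin n) × EuclideanSpace ℝ (Fin n)) × EuclideanSpace ℝ (Fin n) => p.1.1 + p.1.2)
    (((volume.withDensity g).prod ν).prod η) (volume.withDensity (smear ν g)) :=
    (smear_mp hg).comp measurePreserving_fst
  have p2 : MeasurePreserving (fun p : (EuclideanSpace ℝ (Fin n) × EuclideanSpace ℝ (Fin n)) × EuclideanSpace ℝ (Fin n) => p.1.1 + p.2)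
    (((volume.withDensity g).prod ν).prod η) (volume.withDensity (smear η g)) :=
    (smear_mp hg).comp (measurePreserving_fst.prod (MeasurePreserving.id η))
  have p12 : MeasurePreserving (fun p : (EuclideanSpace ℝ (Fin n) × EuclideanSpace ℝ (Fin n)) × EuclideanSpace ℝ (Fin n) => p.1.1 + p.1.2 + p.2)
    (((volume.withDensity g).prod ν).prod η) (volume.withDensity (smear η (smear ν g))) :=
    (smear_mp n1).comp ((smear_mp hg).prod (MeasurePreserving.id η))
  have int : ∀ {f : EuclideanSpace ℝ (Fin n) → ℝ≥0∞} {q : (EuclideanSpace ℝ (Fin n) × EuclideanSpace ℝ (Fin n)) × EuclideanSpace ℝ (Fin n) → EuclideanSpace ℝ (Fin n)}, NiceDens f →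
      MeasurePreserving q (((volume.withDensity g).prod ν).prod η) (volume.withDensity f) →
      Integrable (fun p => Real.log (f (q p)).toReal) (((volume.withDensity g).prod ν).prod η) ∧
      dEnt f = - ∫ p, Real.log (f (q p)).toReal ∂(((volume.withDensity g).prod ν).prod η) ∧
      ∀ᵐ p ∂(((volume.withDensity g).prod ν).prod η), 0 < (f (q p)).toReal := by
    intro f q hf hq
    have hfm := hf.meas
    refine ⟨hq.integrable_comp_of_integrable hf.integrable_log, ?_, hq.quasiMeasurePreserving.ae hf.ae_pos⟩
    unfold dEnt
    rw [← hq.map_eq, integral_map hq.measurable.aemeasurable]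
    apply Measurable.aestronglyMeasurable; fun_prop
  obtain ⟨i0, e0, a0⟩ := int hg p0
  obtain ⟨i1, e1, a1⟩ := int n1 p1
  obtain ⟨i2, e2, a2⟩ := int n2 p2
  obtain ⟨i12, e12, a12⟩ := int n12 p12
  have hm := hg.meas
  have m1 := n1.meas
  have m2 := n2.meas
  have m12 := n12.meas
  have key := int_le_zero (by fun_prop) (submod_R (ν := ν) (η := η) hg) ((i1.add i2).sub (i0.add i12)) ?_
  · rw [integral_sub' (i1.add i2) (i0.add i12), integral_add' i1 i2, integral_add' i0 i12] at key
    rw [e0, e1, e2, e12]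
    linarith
  · filter_upwards [a0, a1, a2, a12] with p b0 b1 b2 b12
    simp only [Pi.sub_apply, Pi.add_apply, ENNReal.toReal_mul, ENNReal.toReal_inv]
    refine le_trans (le_of_eq ?_) (Real.log_le_sub_one_of_pos (by positivity))
    rw [Real.log_mul (by positivity) (by positivity), Real.log_mul (by positivity) (by positivity),
      Real.log_mul (by positivity) (by positivity), Real.log_inv, Real.log_inv]
    ring

end EntropyPart

open MeasureTheory ProbabilityTheory Real
open scoped Pointwise ENNReal

section LowerPart

variable {n : ℕ}

lemma lintegral_scale {c : ℝ} (hc : 0 < c) {φ : EuclideanSpace ℝ (Fin n) → ℝ≥0∞}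
    (hφ : Measurable φ) :
    ∫⁻ x, φ (c • x) = ENNReal.ofReal ((c ^ n)⁻¹) * ∫⁻ x, φ x := by
  rw [← lintegral_map (f := φ) (g := fun x => c • x) hφ (by fun_prop),
    Measure.map_addHaar_smul _ hc.ne', lintegral_smul_measure, abs_of_pos (by positivity)]
  simp

lemma exp_le_renyi {g : EuclideanSpace ℝ (Fin n) → ℝ≥0∞} (hg : NiceDens g) {α : ℝ} (hα : 0 < α) :
    ENNReal.ofReal (Real.exp (-(α * dEnt g))) ≤ ∫⁻ x, g x ^ (1 + α) := by
  have := hg.prob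
  have hm := hg.meas
  obtain ⟨C, hC⟩ := hg.bdd
  have e1 : ∫⁻ x, g x ^ (1 + α) = ∫⁻ x, g x ^ α ∂(volume.withDensity g) := by
    rw [lintegral_withDensity_eq_lintegral_mul _ hm (by fun_prop)]
    apply lintegral_congr
    intro x
    rw [ENNReal.rpow_add_of_nonneg _ _ zero_le_one hα.le]
    simp
  have hi : Integrable (fun x => (g x).toReal ^ α) (volume.withDensity g) := by
    refine Integrable.of_bound (by apply Measurable.aestronglyMeasurable; fun_prop) ((max C 0) ^ α) ?_
    filter_upwards with x
    rw [Real.norm_of_nonneg (by positivity)]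
    gcongr
    have := ENNReal.toReal_mono (by simp) (hC x)
    rwa [ENNReal.toReal_ofReal'] at this
  have e2 : ∫⁻ x, g x ^ α ∂(volume.withDensity g) =
      ENNReal.ofReal (∫ x, (g x).toReal ^ α ∂(volume.withDensity g)) := by
    rw [ofReal_integral_eq_lintegral_ofReal hi (by filter_upwards with x; positivity)]
    apply lintegral_congr
    intro x
    rw [← ENNReal.ofReal_rpow_of_nonneg (by simp) hα.le, ENNReal.ofReal_toReal (hg.ne_top x)]
  rw [e1, e2]
  apply ENNReal.ofReal_le_ofReal
  set l := dEnt g with hl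
  have hil := hg.integrable_log
  have hadd : Integrable (fun x => α * (Real.log (g x).toReal + l)) (volume.withDensity g) :=
    (hil.add (integrable_const l)).const_mul α
  have hIntg : Integrable (fun x => Real.exp (-(α * l)) * (1 + α * (Real.log (g x).toReal + l)))
      (volume.withDensity g) :=
    ((integrable_const (1:ℝ)).add hadd).const_mul _
  have e3 : ∫ x, Real.exp (-(α * l)) * (1 + α * (Real.log (g x).toReal + l)) ∂(volume.withDensity g)
      = Real.exp (-(α * l)) := by
    rw [integral_const_mul, integral_add (integrable_const _) hadd, integral_const_mul,
      integral_add hil (integrable_const l)]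
    have : ∫ x, Real.log (g x).toReal ∂(volume.withDensity g) = -l := by rw [hl, dEnt]; ring
    rw [this]
    simp
  rw [← e3]
  apply integral_mono_ae hIntg hi
  filter_upwards [hg.ae_pos] with x hx
  have h1 := Real.add_one_le_exp (α * (Real.log (g x).toReal + l))
  have h2 : (g x).toReal ^ α = Real.exp (-(α * l)) * Real.exp (α * (Real.log (g x).toReal + l)) := by
    rw [← Real.exp_add, Real.rpow_def_of_pos hx]
    congr 1
    ring
  rw [h2]
  gcongr
  linarith

lemma lower_step {g : EuclideanSpace ℝ (Fin n) → ℝ≥0∞} (hg : NiceDens g) {m : ℕ} (hm1 : 1 ≤ m)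
    {K : Set (EuclideanSpace ℝ (Fin n))} (hK : MeasurableSet K) (h0 : volume K ≠ 0)
    (ht : volume K ≠ ∞)
    (hcone : ∀ l : ℝ, 0 < l → l < 1 → ∀ t ∈ K, ∀ s,
      ENNReal.ofReal ((1 - l) ^ (n * m)) * g s ≤ g (l • t + (1 - l) • s))
    {w : ℝ} (w0 : 0 < w) (w1 : w < 1) :
    Real.log (volume K).toReal - n * Real.log (1 + m) - n * w ≤ dEnt g := by
  have hm := hg.meas
  have mpos : (1 : ℝ) ≤ m := by exact_mod_cast hm1
  set l := w / (1 + m) with hl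
  have l0 : 0 < l := by positivity
  have lw : l ≤ w := by rw [hl]; apply div_le_self w0.le; linarith
  have l1 : l < 1 := by linarith
  have hw1 : 0 < 1 - w := by linarith
  have hl1 : 0 < 1 - l := by linarith
  have hlm : l * (1 + m) = w := by rw [hl]; field_simp
  set c₁ := (1 - w) / (1 - l) with hc₁
  have c1pos : 0 < c₁ := by positivity
  have c2pos : 0 < (1 + m : ℝ) := by positivity
  have mK : Measurable (K.indicator (1 : EuclideanSpace ℝ (Fin n) → ℝ≥0∞)) :=
    measurable_one.indicator hK
  have ppos : 0 < (1 - l) ^ (n * m) := by positivity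
  have key := pl_euc n w w0 w1 (fun x => g (c₁ • x) ^ (1 / (1 - w)))
    (fun y => K.indicator 1 ((1 + m : ℝ) • y))
    (fun z => (ENNReal.ofReal ((1 - l) ^ (n * m)))⁻¹ * g z) (by fun_prop)
    (mK.comp (by fun_prop)) (by fun_prop) ?_
  swap
  · intro x y
    by_cases hy : (1 + m : ℝ) • y ∈ K
    · simp only [hy, Set.indicator_of_mem, Pi.one_apply, ENNReal.one_rpow, mul_one]
      rw [← ENNReal.rpow_mul, one_div, inv_mul_cancel₀ hw1.ne', ENNReal.rpow_one]
      have := hcone l l0 l1 _ hy (c₁ • x)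
      rw [smul_smul, smul_smul, hlm, hc₁, mul_div_cancel₀ _ hl1.ne', add_comm] at this
      rw [mul_comm, ← div_eq_mul_inv, ENNReal.le_div_iff_mul_le (by left; simpa using ppos) (by left; simp), mul_comm]
      exact this
    · simp [hy, ENNReal.zero_rpow_of_pos w0]
  rw [lintegral_scale c1pos (φ := fun x => g x ^ (1 / (1 - w))) (by fun_prop),
    lintegral_scale c2pos mK, lintegral_indicator_one hK, lintegral_const_mul _ hm, hg.int, mul_one] at key
  have hα : 0 < w / (1 - w) := by positivity
  have hren := exp_le_renyi hg hα
  have ea : 1 + w / (1 - w) = 1 / (1 - w) := by field_simp; ring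
  rw [ea] at hren
  set k := (volume K).toReal with hk
  have kpos : 0 < k := ENNReal.toReal_pos h0 ht
  have key2 : ENNReal.ofReal ((((c₁ ^ n)⁻¹ * Real.exp (-(w / (1 - w) * dEnt g))) ^ (1 - w)) *
      (((1 + m : ℝ) ^ n)⁻¹ * k) ^ w) ≤ ENNReal.ofReal ((1 - l) ^ (n * m))⁻¹ := by
    rw [ENNReal.ofReal_inv_of_pos ppos]
    refine le_trans ?_ key
    rw [ENNReal.ofReal_mul (by positivity), ← ENNReal.ofReal_rpow_of_nonneg (by positivity) hw1.le,
      ← ENNReal.ofReal_rpow_of_nonneg (by positivity) w0.le, ENNReal.ofReal_mul (by positivity),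
      ENNReal.ofReal_mul (by positivity), hk, ENNReal.ofReal_toReal ht]
    gcongr
  rw [ENNReal.ofReal_le_ofReal_iff (by positivity)] at key2
  have key3 := Real.log_le_log (by positivity) key2
  rw [Real.log_mul (by positivity) (by positivity), Real.log_rpow (by positivity),
    Real.log_rpow (by positivity), Real.log_mul (by positivity) (by positivity),
    Real.log_mul (by positivity) (by positivity), Real.log_exp, Real.log_inv, Real.log_inv,
    Real.log_inv, Real.log_pow, Real.log_pow, Real.log_pow, hc₁, Real.log_div hw1.ne' hl1.ne'] at key3
  -- scalar estimates
  have s1 : Real.log (1 - w) ≤ -w := by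
    have := Real.log_le_sub_one_of_pos hw1; linarith
  have s2 : -Real.log (1 - l) ≤ l / (1 - l) := by
    have := Real.log_le_sub_one_of_pos (inv_pos.2 hl1)
    rw [Real.log_inv] at this
    have e : l / (1 - l) = (1 - l)⁻¹ - 1 := by field_simp; ring
    linarith
  have s3 : (1 + m - w) * (-Real.log (1 - l)) ≤ w := by
    have e : (1 + m - w) * (l / (1 - l)) = w := by
      rw [← hlm]; field_simp
    calc _ ≤ (1 + m - w) * (l / (1 - l)) := by gcongr; linarith
      _ = w := e
  have s4 : (1 - w) * Real.log (1 - w) ≤ (1 - w) * (-w) := by gcongr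
  have e5 : (1 - w) * (w / (1 - w) * dEnt g) = w * dEnt g := by field_simp
  push_cast at key3
  have hn0 : (0:ℝ) ≤ n := by positivity
  have fin : w * (Real.log k - n * Real.log (1 + m) - n * w) ≤ w * dEnt g := by
    have a1 : (1 - w) * Real.log (1 - w) + (1 + m - w) * (-Real.log (1 - l)) ≤ w ^ 2 := by nlinarith
    have a2 := mul_le_mul_of_nonneg_left a1 hn0
    nlinarith [key3, a2, e5]
  exact le_of_mul_le_mul_left fin w0

lemma lower_ent {g : EuclideanSpace ℝ (Fin n) → ℝ≥0∞} (hg : NiceDens g) {m : ℕ} (hm1 : 1 ≤ m)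
    {K : Set (EuclideanSpace ℝ (Fin n))} (hK : MeasurableSet K) (h0 : volume K ≠ 0)
    (ht : volume K ≠ ∞)
    (hcone : ∀ l : ℝ, 0 < l → l < 1 → ∀ t ∈ K, ∀ s,
      ENNReal.ofReal ((1 - l) ^ (n * m)) * g s ≤ g (l • t + (1 - l) • s)) :
    Real.log (volume K).toReal - n * Real.log (1 + m) ≤ dEnt g := by
  apply le_of_forall_pos_le_add
  intro ε hε
  have hw : 0 < min (1/2) (ε / (n + 1)) := by positivity
  have := lower_step hg hm1 hK h0 ht hcone hw (lt_of_le_of_lt (min_le_left _ _) (by norm_num))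
  have h2 : n * min (1/2) (ε / (n + 1)) ≤ ε := by
    calc (n:ℝ) * min (1/2) (ε / (n + 1)) ≤ n * (ε / (n + 1)) := by gcongr; exact min_le_right _ _
      _ = ε * (n / (n + 1)) := by ring
      _ ≤ ε * 1 := by gcongr; rw [div_le_one (by positivity)]; linarith
      _ = ε := mul_one _
  linarith

/-- The uniform law. -/
noncomputable def unif (B : Set (EuclideanSpace ℝ (Fin n))) : Measure (EuclideanSpace ℝ (Fin n)) :=
  (volume B)⁻¹ • volume.restrict B

lemma unif_prob {B : Set (EuclideanSpace ℝ (Fin n))} (h0 : volume B ≠ 0) (ht : volume B ≠ ∞) :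
    IsProbabilityMeasure (unif B) :=
  ⟨by simp [unif, ENNReal.inv_mul_cancel h0 ht]⟩

lemma unif_bdd {B : Set (EuclideanSpace ℝ (Fin n))} (hB : MeasurableSet B) {ρ : ℝ}
    (h : ∀ y ∈ B, ‖y‖ ≤ ρ) : ∀ᵐ y ∂(unif B), ‖y‖ ≤ ρ := by
  apply Measure.ae_smul_measure
  exact (ae_restrict_iff' hB).2 (by filter_upwards with y; exact h y)

lemma cone_step {g : EuclideanSpace ℝ (Fin n) → ℝ≥0∞} (hg : Measurable g) {p : ℕ}
    {K B : Set (EuclideanSpace ℝ (Fin n))} (hB : MeasurableSet B) (hBc : Convex ℝ B)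
    (hcone : ∀ l : ℝ, 0 < l → l < 1 → ∀ t ∈ K, ∀ s,
      ENNReal.ofReal ((1 - l) ^ p) * g s ≤ g (l • t + (1 - l) • s)) :
    ∀ l : ℝ, 0 < l → l < 1 → ∀ t ∈ B + K, ∀ s,
      ENNReal.ofReal ((1 - l) ^ (n + p)) * smear (unif B) g s ≤ smear (unif B) g (l • t + (1 - l) • s) := by
  rintro l l0 l1 _ ⟨b, hb, t, ht, rfl⟩ s
  have hl1 : 0 < 1 - l := by linarith
  have ef : ∀ z, smear (unif B) g z = (volume B)⁻¹ * ∫⁻ y, B.indicator 1 y * g (z - y) := by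
    intro z
    unfold smear unif
    rw [lintegral_smul_measure, ← lintegral_indicator hB]
    congr 1
    apply lintegral_congr
    intro y
    by_cases hy : y ∈ B <;> simp [hy]
  have mB : Measurable (B.indicator (1 : EuclideanSpace ℝ (Fin n) → ℝ≥0∞)) :=
    measurable_one.indicator hB
  rw [ef, ef, mul_left_comm]
  gcongr
  set F : EuclideanSpace ℝ (Fin n) → ℝ≥0∞ := fun y =>
    B.indicator 1 y * g (l • (b + t) + (1 - l) • s - y) with hF
  have mF : Measurable F := by rw [hF]; fun_prop
  have e1 : ∫⁻ y, F y = ∫⁻ y, F (y + l • b) := (lintegral_add_right_eq_self F _).symm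
  have e2 := lintegral_scale hl1 (φ := fun y => F (y + l • b)) (by fun_prop)
  have e3 : ∫⁻ y, F y = ENNReal.ofReal ((1 - l) ^ n) * ∫⁻ x, F ((1 - l) • x + l • b) := by
    rw [e2, ← mul_assoc, ← ENNReal.ofReal_mul (by positivity), mul_inv_cancel₀ (by positivity), e1]
    simp
  rw [e3, pow_add, ENNReal.ofReal_mul (by positivity), mul_assoc]
  gcongr
  rw [← lintegral_const_mul _ (by fun_prop)]
  apply lintegral_mono
  intro y
  by_cases hy : y ∈ B
  · have hmem : (1 - l) • y + l • b ∈ B := hBc hy hb hl1.le l0.le (by ring)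
    simp only [hF, hy, hmem, Set.indicator_of_mem, Pi.one_apply, one_mul]
    refine (hcone l l0 l1 t ht (s - y)).trans (le_of_eq ?_)
    congr 1
    module
  · simp [hy]

end LowerPart

open MeasureTheory ProbabilityTheory Real
open scoped Pointwise ENNReal

section CombPart

lemma card_powersetCard_mem (m k : ℕ) (hk : 1 ≤ k) (hm : 1 ≤ m) (i : Fin m) :
    ((Finset.powersetCard k (Finset.univ : Finset (Fin m))).filter (fun s => i ∈ s)).card
      = Nat.choose (m - 1) (k - 1) := by
  have : ((Finset.powersetCard k (Finset.univ : Finset (Fin m))).filter (fun s => i ∈ s)).card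
      = (Finset.powersetCard (k - 1) (Finset.univ.erase i)).card := by
    refine Finset.card_bij' (fun s _ => s.erase i) (fun s _ => insert i s) ?_ ?_ ?_ ?_
    · intro s hs
      simp only [Finset.mem_filter, Finset.mem_powersetCard] at hs
      simp only [Finset.mem_powersetCard]
      refine ⟨Finset.erase_subset_erase _ hs.1.1, ?_⟩
      rw [Finset.card_erase_of_mem hs.2, hs.1.2]
    · intro s hs
      simp only [Finset.mem_powersetCard] at hs
      have : i ∉ s := fun h => by simpa using hs.1 h
      simp only [Finset.mem_filter, Finset.mem_powersetCard]
      refine ⟨⟨Finset.subset_univ _, ?_⟩, Finset.mem_insert_self _ _⟩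
      rw [Finset.card_insert_of_notMem this, hs.2]; omega
    · intro s hs
      simp only [Finset.mem_filter] at hs
      exact Finset.insert_erase hs.2
    · intro s hs
      simp only [Finset.mem_powersetCard] at hs
      have : i ∉ s := fun h => by simpa using hs.1 h
      exact Finset.erase_insert this
  rw [this, Finset.card_powersetCard, Finset.card_erase_of_mem (Finset.mem_univ _)]
  simp

lemma submod_mono {m : ℕ} {H : Finset (Fin m) → ℝ}
    (hH : ∀ s i j, i ∉ s → j ∉ s → i ≠ j →
      H (insert i (insert j s)) + H s ≤ H (insert i s) + H (insert j s))
    (s u : Finset (Fin m)) (i : Fin m) (hi : i ∉ s ∪ u) :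
    H (insert i (s ∪ u)) - H (s ∪ u) ≤ H (insert i s) - H s := by
  induction u using Finset.induction_on with
  | empty => simp
  | insert j u hj ih =>
    have hi' : i ∉ s ∪ u := fun h => hi (by simp at h ⊢; tauto)
    have := ih hi'
    by_cases hjs : j ∈ s ∪ u
    · rw [Finset.union_insert, Finset.insert_eq_of_mem hjs]; exact this
    · rw [Finset.union_insert]
      have hij : i ≠ j := by rintro rfl; simp at hi
      have := hH (s ∪ u) i j hi' hjs hij
      linarith

lemma submod_sum {m k : ℕ} (hk : 1 ≤ k) (hkm : k ≤ m) {H : Finset (Fin m) → ℝ}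
    (hH : ∀ s i j, i ∉ s → j ∉ s → i ≠ j →
      H (insert i (insert j s)) + H s ≤ H (insert i s) + H (insert j s)) :
    (Nat.choose (m - 1) (k - 1) : ℝ) * (H Finset.univ - H ∅) ≤
      ∑ s ∈ Finset.powersetCard k (Finset.univ : Finset (Fin m)), (H s - H ∅) := by
  set P : ℕ → Finset (Fin m) := fun j => Finset.univ.filter (fun i => i.val < j) with hP
  set D : Fin m → ℝ := fun i => H (P (i.val + 1)) - H (P i.val) with hD
  have hPs : ∀ i : Fin m, P (i.val + 1) = insert i (P i.val) := by
    intro i; ext j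
    simp only [hP, Finset.mem_filter, Finset.mem_univ, true_and, Finset.mem_insert, Fin.ext_iff]
    omega
  have h1 : ∀ s : Finset (Fin m), ∑ i ∈ s, D i ≤ H s - H ∅ := by
    intro s
    induction s using Finset.induction_on_max with
    | empty => simp
    | insert a s ha ih =>
      have has : a ∉ s := fun h => lt_irrefl _ (ha a h)
      rw [Finset.sum_insert has]
      have hsub : s ∪ P a.val = P a.val := by
        apply Finset.union_eq_right.2
        intro x hx
        simpa [hP] using ha x hx
      have := submod_mono hH s (P a.val) a (by rw [hsub]; simp [hP])
      rw [hsub, ← hPs] at this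
      simp only [hD] at ih ⊢
      linarith
  have h2 : ∑ i, D i = H Finset.univ - H ∅ := by
    simp only [hD]
    rw [Fin.sum_univ_eq_sum_range (fun j => H (P (j + 1)) - H (P j)) m,
      Finset.sum_range_sub (fun j => H (P j))]
    congr 2
    · simp [hP]
    · simp [hP]
  calc _ = ∑ i, (Nat.choose (m - 1) (k - 1) : ℝ) * D i := by rw [← h2, Finset.mul_sum]
    _ = ∑ i, ∑ s ∈ Finset.powersetCard k (Finset.univ : Finset (Fin m)), if i ∈ s then D i else 0 := by
        apply Finset.sum_congr rfl
        intro i _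
        rw [← Finset.sum_filter, Finset.sum_const, card_powersetCard_mem m k hk (hk.trans hkm),
          nsmul_eq_mul]
    _ = ∑ s ∈ Finset.powersetCard k (Finset.univ : Finset (Fin m)), ∑ i ∈ s, D i := by
        rw [Finset.sum_comm]
        apply Finset.sum_congr rfl
        intro s _
        rw [← Finset.sum_filter]; simp
    _ ≤ _ := Finset.sum_le_sum fun s _ => h1 s

end CombPart

section FamilyPart

variable {n : ℕ}

lemma family_exists {m : ℕ} {g : EuclideanSpace ℝ (Fin n) → ℝ≥0∞} (hg : NiceDens g)
    (ν : Fin m → Measure (EuclideanSpace ℝ (Fin n))) [∀ i, IsProbabilityMeasure (ν i)] {ρ : ℝ}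
    (hν : ∀ i, ∀ᵐ y ∂(ν i), ‖y‖ ≤ ρ) :
    ∃ G : Finset (Fin m) → (EuclideanSpace ℝ (Fin n) → ℝ≥0∞), G ∅ = g ∧ (∀ s, NiceDens (G s)) ∧
      ∀ s i, i ∉ s → G (insert i s) = smear (ν i) (G s) := by
  let f : Fin m → {g : EuclideanSpace ℝ (Fin n) → ℝ≥0∞ // NiceDens g} →
      {g : EuclideanSpace ℝ (Fin n) → ℝ≥0∞ // NiceDens g} :=
    fun i g => ⟨smear (ν i) g.1, g.2.smear (hν i)⟩
  haveI : LeftCommutative f := ⟨fun i j g => Subtype.ext (smear_comm g.2.meas)⟩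
  refine ⟨fun s => (s.val.foldr f ⟨g, hg⟩).1, by simp, fun s => Subtype.property _, ?_⟩
  intro s i hi
  simp only [Finset.insert_val_of_notMem hi, Multiset.foldr_cons, f]

lemma smear_supp {g : EuclideanSpace ℝ (Fin n) → ℝ≥0∞} {K B : Set (EuclideanSpace ℝ (Fin n))}
    (hB : MeasurableSet B) (hs : ∀ x, x ∉ K → g x = 0) :
    ∀ x, x ∉ B + K → smear (unif B) g x = 0 := by
  intro x hx
  unfold smear unif
  rw [lintegral_smul_measure, ← lintegral_indicator hB]
  have : ∀ y, B.indicator (fun y => g (x - y)) y = 0 := by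
    intro y
    by_cases hy : y ∈ B
    · rw [Set.indicator_of_mem hy]
      apply hs
      intro h
      exact hx ⟨y, hy, x - y, h, by simp⟩
    · simp [hy]
  simp [this]

noncomputable def uDens (A : Set (EuclideanSpace ℝ (Fin n))) : EuclideanSpace ℝ (Fin n) → ℝ≥0∞ :=
  A.indicator (fun _ => (volume A)⁻¹)

lemma uDens_nice {A : Set (EuclideanSpace ℝ (Fin n))} (hA : IsCompact A) (h0 : volume A ≠ 0) :
    NiceDens (uDens A) where
  meas := measurable_const.indicator hA.measurableSet
  bdd := by
    refine ⟨((volume A)⁻¹).toReal, fun x => ?_⟩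
    rw [ENNReal.ofReal_toReal (by simpa using h0)]
    exact Set.indicator_le_self' (fun _ _ => zero_le) x
  int := by
    unfold uDens
    rw [lintegral_indicator hA.measurableSet]
    simp [ENNReal.inv_mul_cancel h0 hA.measure_lt_top.ne]
  supp := by
    obtain ⟨r, hr⟩ := hA.isBounded.exists_norm_le
    refine ⟨r, fun x hx => ?_⟩
    apply Set.indicator_of_notMem
    intro h
    exact absurd (hr x h) (not_le.2 hx)

lemma uDens_ent {A : Set (EuclideanSpace ℝ (Fin n))} (hA : IsCompact A) (h0 : volume A ≠ 0) :
    dEnt (uDens A) = Real.log (volume A).toReal := by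
  have hg := uDens_nice hA h0
  haveI := hg.prob
  unfold dEnt
  have : ∫ x, Real.log (uDens A x).toReal ∂(volume.withDensity (uDens A)) =
      ∫ x, - Real.log (volume A).toReal ∂(volume.withDensity (uDens A)) := by
    apply integral_congr_ae
    filter_upwards [hg.ae_pos] with x hx
    by_cases h : x ∈ A
    · simp [uDens, h, ENNReal.toReal_inv, Real.log_inv]
    · simp [uDens, h] at hx
  rw [this]
  simp

lemma uDens_cone {A : Set (EuclideanSpace ℝ (Fin n))} (hA : Convex ℝ A) :
    ∀ l : ℝ, 0 < l → l < 1 → ∀ t ∈ A, ∀ s,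
      ENNReal.ofReal ((1 - l) ^ 0) * uDens A s ≤ uDens A (l • t + (1 - l) • s) := by
  intro l l0 l1 t ht s
  by_cases hs : s ∈ A
  · have : l • t + (1 - l) • s ∈ A := hA ht hs l0.le (by linarith) (by ring)
    simp [uDens, hs, this]
  · simp [uDens, hs]

lemma sum_compact {m : ℕ} {A : Set (EuclideanSpace ℝ (Fin n))} (hA : IsCompact A)
    {B : Fin m → Set (EuclideanSpace ℝ (Fin n))} (hB : ∀ i, IsCompact (B i)) (s : Finset (Fin m)) :
    IsCompact (A + ∑ i ∈ s, B i) := by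
  apply hA.add
  induction s using Finset.induction_on with
  | empty => simp
  | insert i s hi ih => rw [Finset.sum_insert hi]; exact (hB i).add ih

lemma sum_vol {m : ℕ} {A : Set (EuclideanSpace ℝ (Fin n))} (hA : volume A ≠ 0)
    {B : Fin m → Set (EuclideanSpace ℝ (Fin n))} (hB : ∀ i, (B i).Nonempty) (s : Finset (Fin m)) :
    volume (A + ∑ i ∈ s, B i) ≠ 0 := by
  have : (∑ i ∈ s, B i).Nonempty := by
    induction s using Finset.induction_on with
    | empty => simp
    | insert i s hi ih => rw [Finset.sum_insert hi]; exact (hB i).add ih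
  obtain ⟨b, hb⟩ := this
  intro h
  apply hA
  have h2 : volume (A + {b}) = 0 := measure_mono_null (Set.add_subset_add_left (by simpa using hb)) h
  simpa using h2

end FamilyPart

/-- Continuous Plünnecke–Ruzsa inequality for convex bodies (Corollary 7.4). -/
theorem statement18 (n m k : ℕ) (hn : 1 ≤ n) (hk : 1 ≤ k) (hkm : k ≤ m)
    (A : Set (EuclideanSpace ℝ (Fin n)))
    (B : Fin m → Set (EuclideanSpace ℝ (Fin n)))
    (hA : IsConvexBody A) (hB : ∀ i, IsConvexBody (B i))
    (c : Finset (Fin m) → ℝ)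
    (hc : ∀ s : Finset (Fin m), s.card = k →
      (volume (A + ∑ i ∈ s, B i)).toReal ^ ((1 : ℝ) / n) ≤
        c s * (volume A).toReal ^ ((1 : ℝ) / n)) :
    (volume (A + ∑ i, B i)).toReal ^ ((1 : ℝ) / n) ≤
      (1 + m) *
        (∏ s ∈ Finset.powersetCard k (Finset.univ : Finset (Fin m)), c s) ^
          (1 / (Nat.choose (m - 1) (k - 1) : ℝ)) *
        (volume A).toReal ^ ((1 : ℝ) / n) := by
  obtain ⟨hAc, hAk, hAi⟩ := hA
  have hm : 1 ≤ m := hk.trans hkm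
  have hpos : ∀ S : Set (EuclideanSpace ℝ (Fin n)), (interior S).Nonempty → volume S ≠ 0 :=
    fun S hS h => (isOpen_interior.measure_pos volume hS).ne' (measure_mono_null interior_subset h)
  have hA0 := hpos A hAi
  have hBk : ∀ i, IsCompact (B i) := fun i => (hB i).2.1
  have hBne : ∀ i, (B i).Nonempty := fun i => (hB i).2.2.mono interior_subset
  haveI hpr : ∀ i, IsProbabilityMeasure (unif (B i)) := fun i =>
    unif_prob (hpos _ (hB i).2.2) (hBk i).measure_lt_top.ne
  obtain ⟨ρ, hρ⟩ : ∃ ρ : ℝ, ∀ i, ∀ y ∈ B i, ‖y‖ ≤ ρ := by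
    obtain ⟨r, hr⟩ := (isCompact_iUnion hBk).isBounded.exists_norm_le
    exact ⟨r, fun i y hy => hr y (Set.mem_iUnion.2 ⟨i, hy⟩)⟩
  have hν : ∀ i, ∀ᵐ y ∂(unif (B i)), ‖y‖ ≤ ρ := fun i => unif_bdd (hBk i).measurableSet (hρ i)
  obtain ⟨G, G0, Gn, Gs⟩ := family_exists (uDens_nice hAk hA0) (fun i => unif (B i)) hν
  have hcomm : ∀ (s : Finset (Fin m)) i, i ∉ s →
      A + ∑ j ∈ insert i s, B j = B i + (A + ∑ j ∈ s, B j) := by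
    intro s i hi
    rw [Finset.sum_insert hi, add_left_comm]
  have Gsupp : ∀ s x, x ∉ A + ∑ i ∈ s, B i → G s x = 0 := by
    intro s
    induction s using Finset.induction_on with
    | empty => intro x hx; rw [G0]; exact Set.indicator_of_notMem (by simpa using hx) _
    | insert i s hi ih =>
      rw [hcomm s i hi, Gs s i hi]
      exact smear_supp (hBk i).measurableSet ih
  have Gcone : ∀ s : Finset (Fin m), ∀ l : ℝ, 0 < l → l < 1 → ∀ t ∈ A + ∑ i ∈ s, B i, ∀ z,
      ENNReal.ofReal ((1 - l) ^ (n * s.card)) * G s z ≤ G s (l • t + (1 - l) • z) := by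
    intro s
    induction s using Finset.induction_on with
    | empty => rw [G0]; simpa using uDens_cone hAc
    | insert i s hi ih =>
      rw [hcomm s i hi, Gs s i hi, Finset.card_insert_of_notMem hi, mul_add, mul_one, add_comm (n * s.card)]
      exact cone_step (Gn s).meas (hBk i).measurableSet (hB i).1 ih
  have hKc := sum_compact hAk hBk
  have hK0 := sum_vol hA0 hBne
  have hlow := lower_ent (Gn Finset.univ) hm (hKc Finset.univ).measurableSet (hK0 _)
    (hKc _).measure_lt_top.ne (by simpa using Gcone Finset.univ)
  have hup : ∀ s, dEnt (G s) ≤ Real.log (volume (A + ∑ i ∈ s, B i)).toReal := fun s =>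
    ent_le_log (Gn s) (hKc s).measurableSet (hK0 s) (hKc s).measure_lt_top.ne (Gsupp s)
  have hH0 : dEnt (G ∅) = Real.log (volume A).toReal := by rw [G0, uDens_ent hAk hA0]
  have hsub := submod_sum hk hkm (H := fun s => dEnt (G s)) (by
    intro s i j hi hj hij
    have := ent_submod (Gn s) (hν j) (hν i)
    rw [← Gs s j hj, ← Gs s i hi, ← Gs _ i (by simp [hi, hij])] at this
    linarith)
  have hbpos : (0:ℝ) < Nat.choose (m - 1) (k - 1) := by
    exact_mod_cast Nat.choose_pos (by omega)
  have hn' : (0:ℝ) < n := by exact_mod_cast hn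
  have hAp : 0 < (volume A).toReal := ENNReal.toReal_pos hA0 hAk.measure_lt_top.ne
  have hKp : ∀ s, 0 < (volume (A + ∑ i ∈ s, B i)).toReal := fun s =>
    ENNReal.toReal_pos (hK0 s) (hKc s).measure_lt_top.ne
  have hcs : ∀ s ∈ Finset.powersetCard k (Finset.univ : Finset (Fin m)), 0 < c s ∧
      dEnt (G s) - dEnt (G ∅) ≤ n * Real.log (c s) := by
    intro s hs
    have h := hc s (Finset.mem_powersetCard.1 hs).2
    have h1 := Real.rpow_pos_of_pos (hKp s) ((1:ℝ)/n)
    have h2 := Real.rpow_pos_of_pos hAp ((1:ℝ)/n)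
    have hcp : 0 < c s := pos_of_mul_pos_left (h1.trans_le h) h2.le
    refine ⟨hcp, ?_⟩
    have h3 := Real.log_le_log h1 h
    rw [Real.log_mul hcp.ne' h2.ne', Real.log_rpow (hKp s), Real.log_rpow hAp] at h3
    have h4 := mul_le_mul_of_nonneg_left h3 hn'.le
    have e1 : ∀ x : ℝ, (n:ℝ) * (1 / n * x) = x := fun x => by field_simp
    rw [mul_add, e1, e1] at h4
    have := hup s
    rw [hH0]
    linarith
  have hsum : ∑ s ∈ Finset.powersetCard k (Finset.univ : Finset (Fin m)),
      (dEnt (G s) - dEnt (G ∅)) ≤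
      n * Real.log (∏ s ∈ Finset.powersetCard k (Finset.univ : Finset (Fin m)), c s) := by
    rw [Real.log_prod (fun s hs => (hcs s hs).1.ne'), Finset.mul_sum]
    exact Finset.sum_le_sum fun s hs => (hcs s hs).2
  have hPp : 0 < ∏ s ∈ Finset.powersetCard k (Finset.univ : Finset (Fin m)), c s :=
    Finset.prod_pos fun s hs => (hcs s hs).1
  set Pr := ∏ s ∈ Finset.powersetCard k (Finset.univ : Finset (Fin m)), c s with hPr
  set b : ℝ := (Nat.choose (m - 1) (k - 1) : ℝ) with hb
  have hm1 : (0:ℝ) < 1 + m := by positivity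
  have hPb := Real.rpow_pos_of_pos hPp (1 / b)
  have hAn := Real.rpow_pos_of_pos hAp ((1:ℝ)/n)
  rw [← Real.log_le_log_iff (Real.rpow_pos_of_pos (hKp Finset.univ) _) (by positivity),
    Real.log_mul (by positivity) hAn.ne', Real.log_mul hm1.ne' hPb.ne', Real.log_rpow (hKp _),
    Real.log_rpow hAp, Real.log_rpow hPp]
  have h5 : dEnt (G Finset.univ) - dEnt (G ∅) ≤ n * (1 / b * Real.log Pr) := by
    have h6 := hsub.trans hsum
    have h7 := mul_le_mul_of_nonneg_left h6 (show 0 ≤ 1 / b by positivity)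
    have e : ∀ x, 1 / b * (b * x) = x := fun x => by field_simp
    rw [e] at h7
    linarith
  rw [hH0] at h5
  have h8 : Real.log (volume (A + ∑ i, B i)).toReal ≤
      n * (Real.log (1 + m) + 1 / b * Real.log Pr) + Real.log (volume A).toReal := by linarith
  have h9 := mul_le_mul_of_nonneg_left h8 (show (0:ℝ) ≤ 1 / n by positivity)
  have e : ∀ x, 1 / (n:ℝ) * (n * x) = x := fun x => by field_simp
  rw [mul_add, e] at h9
  linarith
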